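/- arXiv:2005.06384 — 2 statements merged into one kernel-verified Lean document; each statement's English description precedes it below -/
import Mathlib

section
/- Let a be a real number with -2 < a < 1 and a ≠ 0. Then for every real x > 0, Γ(a,x) > (1/a) · (G_{a+1}(x) − x^a e^(−x)), where G_{a+1}(x) = ((x+b_{a+1})^{a+1} − x^{a+1}) e^(−x)/((a+1) b_{a+1}) if a ≠ −1, and G_0(x) = e^(−x) ln((x+1)/x) if a = −1. -/
/-!
Let `b = b_{a+1}`, so that `b ^ a = Γ(a + 2)`. Then `e^x G_{a+1}(x)` is the mean of `(x + U) ^ a`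
for `U` uniform on `(0, b)`, and `e^x Γ(a + 1, x) = x ^ a + a e^x Γ(a, x)` is the mean of
`(x + E) ^ a` for `E` standard exponential. The claim is thus that `f(u) = (x + u) ^ a / a` has a
larger mean at `E` than at `U`.

* If `b ≤ 1`, then `U` is stochastically smaller than `E`, and `f` is increasing.
* If `b > 1`, then `a > -1` because `Γ ≥ 1` on `(0, 1]`. The choice of `b` says that
  `g(u) = u ^ a / a` has the same mean at `U` and at `E`, and `f` is a strictly convex function of
  `g` because `f' / g' = (1 + x / u) ^ (a - 1)` increases. The difference of densities
  `e^(-u) - 1_{(0, b)}(u) / b` has the sign pattern `+, -, +` with changes at `log b` and `b`. So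
  has the difference of `f` and its chord, the affine function of `g` that agrees with `f` at these
  two points; and the chord has equal means at `U` and `E`.
-/

open Real Filter Set

/-- Upper incomplete gamma function `Γ(a,x) = ∫_x^∞ t^(a-1) e^(-t) dt`. -/
noncomputable def incGamma (a x : ℝ) : ℝ := ∫ t in Set.Ioi x, t ^ (a - 1) * Real.exp (-t)

/-- `b_a = Γ(a+1)^(1/(a-1))` for `a ≠ 1`, and `b_1 = e^(1-γ)`. -/
noncomputable def bCoef (a : ℝ) : ℝ :=
  if a = 1 then Real.exp (1 - Real.eulerMascheroniConstant)
  else Real.Gamma (a + 1) ^ (1 / (a - 1))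

/-- `G_a(x) = ((x+b_a)^a - x^a) e^(-x) / (a b_a)`. -/
noncomputable def Gbound (a x : ℝ) : ℝ :=
  ((x + bCoef a) ^ a - x ^ a) * Real.exp (-x) / (a * bCoef a)

/-- `g_a(x) = (((x+2)^a - x^a - 2^a)/(2a) + Γ(a)) e^(-x)`. -/
noncomputable def gbound (a x : ℝ) : ℝ :=
  (((x + 2) ^ a - x ^ a - (2 : ℝ) ^ a) / (2 * a) + Real.Gamma a) * Real.exp (-x)

/-- `g_a^lo(x) = x^a e^(-x) (x-a-1) / ((x-a)^2 + a)`. -/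
noncomputable def gLo (a x : ℝ) : ℝ :=
  x ^ a * Real.exp (-x) * (x - a - 1) / ((x - a) ^ 2 + a)

/-- `g_a^hi(x) = x^a e^(-x) / (x-a)`. -/
noncomputable def gHi (a x : ℝ) : ℝ := x ^ a * Real.exp (-x) / (x - a)

open MeasureTheory Topology

section RelativeConvexity

/-- `f` is strictly convex relative to `g` on `s`: where `g` is strictly increasing, this says that
`f` is a strictly convex function of the value of `g`. The slope inequality is cleared of
denominators. -/
def StrictConvexOnRel (s : Set ℝ) (f g : ℝ → ℝ) : Prop :=
  ∀ ⦃p⦄, p ∈ s → ∀ ⦃q⦄, q ∈ s → ∀ ⦃r⦄, r ∈ s → p < q → q < r →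
    (f q - f p) * (g r - g q) < (f r - f q) * (g q - g p)

variable {s : Set ℝ} {f g : ℝ → ℝ}

theorem strictConvexOnRel_of_hasDerivAt {g' ρ : ℝ → ℝ} (hs : s.OrdConnected)
    (hg : ∀ u ∈ s, HasDerivAt g (g' u) u) (hg' : ∀ u ∈ s, 0 < g' u)
    (hf : ∀ u ∈ s, HasDerivAt f (ρ u * g' u) u) (hρ : StrictMonoOn ρ s) :
    StrictConvexOnRel s f g := by
  have cauchy {p r : ℝ} (hp : p ∈ s) (hr : r ∈ s) (hpr : p < r) :
      ∃ c ∈ Ioo p r, f r - f p = ρ c * (g r - g p) := by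
    have hsub : Icc p r ⊆ s := hs.out hp hr
    obtain ⟨c, hc, h⟩ := exists_ratio_hasDerivAt_eq_ratio_slope f (fun u => ρ u * g' u) hpr
      (fun u hu => (hf u (hsub hu)).continuousAt.continuousWithinAt)
      (fun u hu => hf u (hsub (Ioo_subset_Icc_self hu))) g g'
      (fun u hu => (hg u (hsub hu)).continuousAt.continuousWithinAt)
      (fun u hu => hg u (hsub (Ioo_subset_Icc_self hu)))
    refine ⟨c, hc, mul_right_cancel₀ (hg' c (hsub (Ioo_subset_Icc_self hc))).ne' ?_⟩
    linarith
  have hmono : StrictMonoOn g s := strictMonoOn_of_deriv_pos hs.convex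
    (fun u hu => (hg u hu).continuousAt.continuousWithinAt) fun u hu => by
      rw [(hg u (interior_subset hu)).deriv]
      exact hg' u (interior_subset hu)
  intro p hp q hq r hr hpq hqr
  obtain ⟨c, hc, hfc⟩ := cauchy hp hq hpq
  obtain ⟨d, hd, hfd⟩ := cauchy hq hr hqr
  have hcd : ρ c < ρ d := hρ (hs.out hp hq ⟨hc.1.le, hc.2.le⟩) (hs.out hq hr ⟨hd.1.le, hd.2.le⟩)
    (hc.2.trans hd.1)
  have hpos : 0 < (g q - g p) * (g r - g q) :=
    mul_pos (sub_pos.2 (hmono hp hq hpq)) (sub_pos.2 (hmono hq hr hqr))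
  calc (f q - f p) * (g r - g q) = ρ c * ((g q - g p) * (g r - g q)) := by rw [hfc]; ring
    _ < ρ d * ((g q - g p) * (g r - g q)) := mul_lt_mul_of_pos_right hcd hpos
    _ = (f r - f q) * (g q - g p) := by rw [hfd]; ring

theorem StrictConvexOnRel.exists_chord (hfg : StrictConvexOnRel s f g) {p q : ℝ} (hp : p ∈ s)
    (hq : q ∈ s) (hpq : p < q) (hg : g p < g q) :
    ∃ α β : ℝ, ∀ u ∈ s, (u ≤ p → α + β * g u ≤ f u) ∧
      (p ≤ u → u ≤ q → f u ≤ α + β * g u) ∧ (q < u → α + β * g u < f u) := by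
  have hd : 0 < g q - g p := sub_pos.2 hg
  set β := (f q - f p) / (g q - g p) with hβ
  have hchord (u : ℝ) : (f u - (f p - β * g p + β * g u)) * (g q - g p) =
      (f u - f p) * (g q - g p) - (f q - f p) * (g u - g p) := by
    rw [hβ]
    field_simp
    ring
  refine ⟨f p - β * g p, β, fun u hu => ⟨fun hup => ?_, fun hpu huq => ?_, fun hqu => ?_⟩⟩
  · rcases hup.eq_or_lt with rfl | hup
    · linarith
    · have := hfg hu hp hq hup hpq
      refine sub_nonneg.1 (nonneg_of_mul_nonneg_left ?_ hd)
      linarith [hchord u]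
  · rcases hpu.eq_or_lt with rfl | hpu
    · linarith
    rcases huq.eq_or_lt with rfl | huq
    · refine sub_nonpos.1 (nonpos_of_mul_nonpos_left ?_ hd)
      linarith [hchord u]
    · have := hfg hp hu hq hpu huq
      refine sub_nonpos.1 (nonpos_of_mul_nonpos_left ?_ hd)
      linarith [hchord u]
  · have := hfg hp hq hu hpq hqu
    refine sub_pos.1 (pos_of_mul_pos_left ?_ hd.le)
    linarith [hchord u]

end RelativeConvexity

section UniformMean

variable {w f g : ℝ → ℝ} {b : ℝ}

theorem intervalAverage_lt_integral_mul_of_sign (hb : 0 < b) (hf : IntervalIntegrable f volume 0 b)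
    (hwf : IntegrableOn (fun u => w u * f u) (Ioi 0))
    (hsign : ∀ u ∈ Ioc 0 b, 0 ≤ (w u - b⁻¹) * f u) (hpos : ∀ u, b < u → 0 < w u * f u) :
    ⨍ u in 0..b, f u < ∫ u in Ioi 0, w u * f u := by
  have hwf₁ : IntegrableOn (fun u => w u * f u) (Ioc 0 b) := hwf.mono_set Ioc_subset_Ioi_self
  have hwf₂ : IntegrableOn (fun u => w u * f u) (Ioi b) := hwf.mono_set (Ioi_subset_Ioi hb.le)
  have hle : ⨍ u in 0..b, f u ≤ ∫ u in Ioc 0 b, w u * f u := by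
    rw [interval_average_eq, sub_zero, smul_eq_mul, intervalIntegral.integral_of_le hb.le,
      ← integral_const_mul]
    refine setIntegral_mono_on (hf.1.const_mul _) hwf₁ measurableSet_Ioc fun u hu => ?_
    linarith [hsign u hu]
  have htail : 0 < ∫ u in Ioi b, w u * f u := by
    have hsupp : Ioi b ⊆ Function.support fun u => w u * f u := fun u hu => (hpos u hu).ne'
    rw [setIntegral_pos_iff_support_of_nonneg_ae
      (ae_restrict_of_forall_mem measurableSet_Ioi fun u hu => (hpos u hu).le) hwf₂,
      inter_eq_right.2 hsupp]
    simp
  rw [← Ioc_union_Ioi_eq_Ioi hb.le,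
    setIntegral_union (Ioc_disjoint_Ioi le_rfl) measurableSet_Ioi hwf₁ hwf₂]
  linarith

theorem intervalAverage_lt_integral_mul_of_sub_affine (hb : 0 < b)
    (hw_one : ∫ u in Ioi 0, w u = 1) (hf : IntervalIntegrable f volume 0 b)
    (hwf : IntegrableOn (fun u => w u * f u) (Ioi 0)) (hg : IntervalIntegrable g volume 0 b)
    (hwg : IntegrableOn (fun u => w u * g u) (Ioi 0))
    (hmean : ⨍ u in 0..b, g u = ∫ u in Ioi 0, w u * g u) (α β : ℝ)
    (hsign : ∀ u ∈ Ioc 0 b, 0 ≤ (w u - b⁻¹) * (f u - (α + β * g u)))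
    (hpos : ∀ u, b < u → 0 < w u * (f u - (α + β * g u))) :
    ⨍ u in 0..b, f u < ∫ u in Ioi 0, w u * f u := by
  have hw : IntegrableOn w (Ioi 0) := integrable_of_integral_eq_one hw_one
  have hh : IntervalIntegrable (fun u => α + β * g u) volume 0 b :=
    intervalIntegrable_const.add (hg.const_mul β)
  have hαβ (u : ℝ) : w u * (α + β * g u) = w u * α + β * (w u * g u) := by ring
  have hwh : IntegrableOn (fun u => w u * (α + β * g u)) (Ioi 0) := by
    simp only [hαβ]
    exact (hw.mul_const α).add (hwg.const_mul β)
  have hmean_affine : ⨍ u in 0..b, (α + β * g u) = ∫ u in Ioi 0, w u * (α + β * g u) := by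
    simp only [hαβ]
    rw [integral_add (hw.mul_const α) (hwg.const_mul β), integral_mul_const, integral_const_mul,
      hw_one, ← hmean, interval_average_eq_div, interval_average_eq_div,
      intervalIntegral.integral_add intervalIntegrable_const (hg.const_mul β),
      intervalIntegral.integral_const, intervalIntegral.integral_const_mul, smul_eq_mul, sub_zero]
    field_simp
  have hlt := intervalAverage_lt_integral_mul_of_sign (f := fun u => f u - (α + β * g u)) hb
    (hf.sub hh) (by simpa only [mul_sub] using! hwf.sub hwh) hsign hpos
  simp only [mul_sub] at hlt
  rw [integral_sub hwf hwh, ← hmean_affine, interval_average_eq,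
    intervalIntegral.integral_sub hf hh, smul_sub, ← interval_average_eq,
    ← interval_average_eq] at hlt
  linarith

theorem intervalAverage_lt_integral_mul_of_strictMonoOn (hb : 0 < b)
    (hfm : StrictMonoOn f (Ioi 0)) (hw_one : ∫ u in Ioi 0, w u = 1)
    (hw_pos : ∀ u, b < u → 0 < w u) (hw_le : ∀ u ∈ Ioc 0 b, w u ≤ b⁻¹)
    (hf : IntervalIntegrable f volume 0 b) (hwf : IntegrableOn (fun u => w u * f u) (Ioi 0)) :
    ⨍ u in 0..b, f u < ∫ u in Ioi 0, w u * f u := by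
  refine intervalAverage_lt_integral_mul_of_sub_affine (g := 0) hb hw_one hf hwf
    intervalIntegrable_const (by simp) (by simp) (f b) 0 (fun u hu => ?_)
    fun u hu => ?_
  · have hfu : f u ≤ f b := hfm.monotoneOn hu.1 hb hu.2
    exact mul_nonneg_of_nonpos_of_nonpos (sub_nonpos.2 (hw_le u hu)) (by simpa using hfu)
  · have hfu : f b < f u := hfm hb (hb.trans hu) hu
    exact mul_pos (hw_pos u hu) (by simpa using hfu)

theorem StrictConvexOnRel.intervalAverage_lt_integral_mul (hfg : StrictConvexOnRel (Ioi 0) f g)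
    {p : ℝ} (hp : 0 < p) (hpb : p < b) (hgp : g p < g b)
    (hw_one : ∫ u in Ioi 0, w u = 1) (hw_pos : ∀ u, b < u → 0 < w u)
    (hw_anti : AntitoneOn w (Ioi 0)) (hwp : w p = b⁻¹)
    (hf : IntervalIntegrable f volume 0 b) (hwf : IntegrableOn (fun u => w u * f u) (Ioi 0))
    (hg : IntervalIntegrable g volume 0 b) (hwg : IntegrableOn (fun u => w u * g u) (Ioi 0))
    (hmean : ⨍ u in 0..b, g u = ∫ u in Ioi 0, w u * g u) :
    ⨍ u in 0..b, f u < ∫ u in Ioi 0, w u * f u := by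
  have hb : 0 < b := hp.trans hpb
  obtain ⟨α, β, hchord⟩ := hfg.exists_chord hp hb hpb hgp
  refine intervalAverage_lt_integral_mul_of_sub_affine hb hw_one hf hwf hg hwg hmean α β
    (fun u hu => ?_) fun u hu => ?_
  · rw [← hwp]
    obtain ⟨hleft, hmid, -⟩ := hchord u hu.1
    rcases le_total u p with hup | hpu
    · exact mul_nonneg (sub_nonneg.2 (hw_anti hu.1 hp hup)) (sub_nonneg.2 (hleft hup))
    · exact mul_nonneg_of_nonpos_of_nonpos (sub_nonpos.2 (hw_anti hp hu.1 hpu))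
        (sub_nonpos.2 (hmid hpu hu.2))
  · exact mul_pos (hw_pos u hu) (sub_pos.2 ((hchord u (hb.trans hu)).2.2 hu))

end UniformMean

section IncompleteGamma

variable {x : ℝ}

theorem integrableOn_rpow_mul_exp_neg_Ioi (s : ℝ) (hx : 0 < x) :
    IntegrableOn (fun t : ℝ => t ^ s * exp (-t)) (Ioi x) := by
  simp only [mul_comm (_ ^ s)]
  exact integrable_of_isBigO_exp_neg one_half_pos
    (continuousOn_id.neg.rexp.mul
      (continuousOn_id.rpow_const fun t ht => Or.inl (hx.trans_le ht).ne'))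
    (Gamma_integrand_isLittleO s).isBigO

theorem incGamma_add_one (a : ℝ) (hx : 0 < x) :
    incGamma (a + 1) x = a * incGamma a x + x ^ a * exp (-x) := by
  have hderiv : ∀ t ∈ Ici x, HasDerivAt (fun t : ℝ => t ^ a * exp (-t))
      (a * (t ^ (a - 1) * exp (-t)) - t ^ a * exp (-t)) t := fun t ht => by
    refine ((hasDerivAt_rpow_const (Or.inl (hx.trans_le ht).ne')).mul
      (hasDerivAt_neg t).exp).congr_deriv ?_
    ring
  have hlim : Tendsto (fun t : ℝ => t ^ a * exp (-t)) atTop (𝓝 0) := by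
    simpa using tendsto_rpow_mul_exp_neg_mul_atTop_nhds_zero a 1 one_pos
  have hint := (integrableOn_rpow_mul_exp_neg_Ioi (a - 1) hx).const_mul a
  have hint' := integrableOn_rpow_mul_exp_neg_Ioi a hx
  have hparts := integral_Ioi_of_hasDerivAt_of_tendsto' hderiv (hint.sub hint') hlim
  rw [integral_sub hint hint', integral_const_mul] at hparts
  simp only [incGamma, add_sub_cancel_right]
  linarith

theorem integrableOn_Ioi_comp_const_add {f : ℝ → ℝ} {a c : ℝ} (hf : IntegrableOn f (Ioi (c + a))) :
    IntegrableOn (fun u => f (c + u)) (Ioi a) := by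
  have h := ((measurePreserving_add_left volume c).integrableOn_comp_preimage
    (measurableEmbedding_addLeft c)).2 hf
  rwa [preimage_const_add_Ioi, add_sub_cancel_left] at h

theorem integral_Ioi_comp_const_add (f : ℝ → ℝ) (a c : ℝ) :
    ∫ u in Ioi a, f (c + u) = ∫ t in Ioi (c + a), f t := by
  have h := (measurePreserving_add_left volume c).setIntegral_preimage_emb
    (measurableEmbedding_addLeft c) f (Ioi (c + a))
  rwa [preimage_const_add_Ioi, add_sub_cancel_left] at h

theorem exp_neg_mul_rpow_const_add (s x u : ℝ) :
    exp (-u) * (x + u) ^ s = exp x * ((x + u) ^ s * exp (-(x + u))) := by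
  rw [mul_left_comm, ← exp_add, mul_comm]
  congr 2
  ring

theorem integrableOn_exp_neg_mul_rpow_const_add (s : ℝ) (hx : 0 < x) :
    IntegrableOn (fun u : ℝ => exp (-u) * (x + u) ^ s) (Ioi 0) := by
  simp only [exp_neg_mul_rpow_const_add]
  refine (integrableOn_Ioi_comp_const_add (f := fun t => t ^ s * exp (-t)) ?_).const_mul _
  simpa using integrableOn_rpow_mul_exp_neg_Ioi s hx

theorem integral_exp_neg_mul_rpow_const_add (s x : ℝ) :
    ∫ u in Ioi 0, exp (-u) * (x + u) ^ s = exp x * incGamma (s + 1) x := by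
  simp only [exp_neg_mul_rpow_const_add]
  rw [integral_const_mul, integral_Ioi_comp_const_add (fun t => t ^ s * exp (-t)), incGamma,
    add_zero, add_sub_cancel_right]

end IncompleteGamma

section ShiftedPower

variable {a x b : ℝ}

theorem hasDerivAt_rpow_const_add_div (ha : a ≠ 0) {u : ℝ} (hu : 0 < x + u) :
    HasDerivAt (fun u : ℝ => (x + u) ^ a / a) ((x + u) ^ (a - 1)) u := by
  refine ((((hasDerivAt_id u).const_add x).rpow_const (Or.inl hu.ne')).div_const a).congr_deriv ?_
  simp only [id, one_mul]
  exact mul_div_cancel_left₀ _ ha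

theorem strictMonoOn_rpow_const_add_div (ha : a ≠ 0) (hx : 0 ≤ x) :
    StrictMonoOn (fun u : ℝ => (x + u) ^ a / a) (Ioi 0) := by
  have hd (u : ℝ) (hu : u ∈ Ioi (0 : ℝ)) := hasDerivAt_rpow_const_add_div ha
    (add_pos_of_nonneg_of_pos hx hu)
  refine strictMonoOn_of_deriv_pos (convex_Ioi 0)
    (fun u hu => (hd u hu).continuousAt.continuousWithinAt) fun u hu => ?_
  rw [interior_Ioi] at hu
  rw [(hd u hu).deriv]
  exact rpow_pos_of_pos (add_pos_of_nonneg_of_pos hx hu) _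

theorem strictConvexOnRel_rpow_const_add_div (ha0 : a ≠ 0) (ha1 : a < 1) (hx : 0 < x) :
    StrictConvexOnRel (Ioi 0) (fun u => (x + u) ^ a / a) (fun u => u ^ a / a) := by
  refine strictConvexOnRel_of_hasDerivAt (g' := fun u => u ^ (a - 1))
    (ρ := fun u => ((x + u) / u) ^ (a - 1)) ordConnected_Ioi (fun u hu => ?_)
    (fun u hu => rpow_pos_of_pos hu _) (fun u hu => ?_) fun u hu v hv huv => ?_
  · simpa using hasDerivAt_rpow_const_add_div (x := 0) ha0 (by simpa using hu)
  · have hu : 0 < u := hu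
    rw [← mul_rpow (by positivity) hu.le, div_mul_cancel₀ _ hu.ne']
    exact hasDerivAt_rpow_const_add_div ha0 (by positivity)
  · have hu : 0 < u := hu
    have hv : 0 < v := hv
    refine rpow_lt_rpow_of_neg (by positivity) ?_ (by linarith)
    rw [add_div, add_div, div_self hu.ne', div_self hv.ne']
    gcongr

theorem intervalIntegrable_rpow_const_add (a : ℝ) (hx : 0 < x) (hb : 0 ≤ b) :
    IntervalIntegrable (fun u : ℝ => (x + u) ^ a) volume 0 b := by
  refine ContinuousOn.intervalIntegrable ?_
  rw [uIcc_of_le hb]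
  exact (continuousOn_const.add continuousOn_id).rpow_const
    fun u hu => Or.inl (add_pos_of_pos_of_nonneg hx hu.1).ne'

theorem intervalAverage_rpow_const_add (ha : a ≠ -1) (hx : 0 < x) (hb : 0 < b) :
    ⨍ u in 0..b, (x + u) ^ a = ((x + b) ^ (a + 1) - x ^ (a + 1)) / ((a + 1) * b) := by
  rw [interval_average_eq_div, intervalIntegral.integral_comp_add_left (fun t : ℝ => t ^ a),
    integral_rpow (Or.inr ⟨ha, notMem_uIcc_of_lt (by simpa) (by positivity)⟩), add_zero, sub_zero,
    div_div]

theorem intervalAverage_inv_const_add (hx : 0 < x) (hb : 0 < b) :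
    ⨍ u in 0..b, (x + u)⁻¹ = log ((x + b) / x) / b := by
  rw [interval_average_eq_div, intervalIntegral.integral_comp_add_left (fun t : ℝ => t⁻¹), add_zero,
    integral_inv_of_pos hx (by positivity), sub_zero]

theorem intervalAverage_rpow (ha : -1 < a) (hb : b ≠ 0) :
    ⨍ u in 0..b, u ^ a = b ^ a / (a + 1) := by
  have ha1 : a + 1 ≠ 0 := by linarith
  rw [interval_average_eq_div, integral_rpow (Or.inl ha), zero_rpow ha1, rpow_add_one hb]
  field_simp
  simp

theorem intervalAverage_rpow_eq_integral_exp_neg_mul (ha : -1 < a) (hb : b ≠ 0)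
    (hba : b ^ a = Gamma (a + 2)) :
    ⨍ u in 0..b, u ^ a = ∫ u in Ioi 0, exp (-u) * u ^ a := by
  have ha1 : a + 1 ≠ 0 := by linarith
  have hΓ := Gamma_eq_integral (s := a + 1) (by linarith)
  rw [add_sub_cancel_right] at hΓ
  rw [← hΓ, intervalAverage_rpow ha hb, hba, show a + 2 = a + 1 + 1 by ring,
    Gamma_add_one ha1, mul_div_cancel_left₀ _ ha1]

theorem integrableOn_exp_neg_mul_rpow_const_add_div (a : ℝ) (hx : 0 < x) :
    IntegrableOn (fun u : ℝ => exp (-u) * ((x + u) ^ a / a)) (Ioi 0) := by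
  simpa only [mul_div_assoc] using! (integrableOn_exp_neg_mul_rpow_const_add a hx).div_const a

theorem intervalAverage_rpow_const_add_div_lt_of_le_one (ha : a ≠ 0) (hx : 0 < x) (hb : 0 < b)
    (hb1 : b ≤ 1) :
    ⨍ u in 0..b, (x + u) ^ a / a < ∫ u in Ioi 0, exp (-u) * ((x + u) ^ a / a) := by
  refine intervalAverage_lt_integral_mul_of_strictMonoOn hb
    (strictMonoOn_rpow_const_add_div ha hx.le) integral_exp_neg_Ioi_zero (fun u _ => exp_pos _)
    (fun u hu => ?_)
    ((intervalIntegrable_rpow_const_add a hx hb.le).div_const a)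
    (integrableOn_exp_neg_mul_rpow_const_add_div a hx)
  calc exp (-u) ≤ 1 := exp_le_one_iff.2 (neg_nonpos.2 hu.1.le)
    _ ≤ b⁻¹ := (one_le_inv₀ hb).2 hb1

theorem intervalAverage_rpow_const_add_div_lt_of_one_lt (ha : -1 < a) (ha0 : a ≠ 0) (ha1 : a < 1)
    (hx : 0 < x) (hb : 1 < b) (hba : b ^ a = Gamma (a + 2)) :
    ⨍ u in 0..b, (x + u) ^ a / a < ∫ u in Ioi 0, exp (-u) * ((x + u) ^ a / a) := by
  have hb0 : 0 < b := one_pos.trans hb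
  have hp : 0 < log b := log_pos hb
  have hpb : log b < b := (log_le_sub_one_of_pos hb0).trans_lt (sub_one_lt b)
  have hg : StrictMonoOn (fun u : ℝ => u ^ a / a) (Ioi 0) := by
    simpa using strictMonoOn_rpow_const_add_div ha0 le_rfl
  have hmean : ⨍ u in 0..b, u ^ a / a = ∫ u in Ioi 0, exp (-u) * (u ^ a / a) := by
    simp only [← mul_div_assoc]
    rw [integral_div, ← intervalAverage_rpow_eq_integral_exp_neg_mul ha hb0.ne' hba]
    exact integral_div _ _
  refine (strictConvexOnRel_rpow_const_add_div ha0 ha1 hx).intervalAverage_lt_integral_mul hp hpb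
    (hg hp hb0 hpb) integral_exp_neg_Ioi_zero (fun u _ => exp_pos _)
    (fun u _ v _ huv => exp_le_exp.2 (neg_le_neg huv)) (by rw [exp_neg, exp_log hb0])
    ((intervalIntegrable_rpow_const_add a hx hb0.le).div_const a)
    (integrableOn_exp_neg_mul_rpow_const_add_div a hx)
    ((intervalIntegral.intervalIntegrable_rpow' ha).div_const a) ?_ hmean
  have hint := GammaIntegral_convergent (s := a + 1) (by linarith)
  simpa only [add_sub_cancel_right, mul_div_assoc] using! hint.div_const a

end ShiftedPower

section Bound

variable {a x : ℝ}

theorem bCoef_pos (ha : -1 < a) : 0 < bCoef a := by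
  have hΓ : 0 < Gamma (a + 1) := Gamma_pos_of_pos (by linarith)
  unfold bCoef
  split_ifs <;> positivity

theorem bCoef_rpow (ha : -1 < a) (ha1 : a ≠ 1) : bCoef a ^ (a - 1) = Gamma (a + 1) := by
  have hΓ : 0 < Gamma (a + 1) := Gamma_pos_of_pos (by linarith)
  rw [bCoef, if_neg ha1, ← rpow_mul hΓ.le, one_div_mul_cancel (sub_ne_zero.2 ha1), rpow_one]

theorem bCoef_zero : bCoef 0 = 1 := by simp [bCoef]

theorem bCoef_le_one (ha : -1 < a) (ha0 : a ≤ 0) : bCoef a ≤ 1 := by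
  have hΓ : 1 ≤ Gamma (a + 1) := by
    simpa using Gamma_strictAntiOn_Ioc.antitoneOn (a := a + 1) (b := 1)
      ⟨by linarith, by linarith⟩ ⟨one_pos, le_rfl⟩ (by linarith)
  rw [bCoef, if_neg (by linarith)]
  exact rpow_le_one_of_one_le_of_nonpos hΓ (one_div_nonpos.2 (by linarith))

theorem Gbound_eq_intervalAverage (ha : -1 < a) (ha0 : a ≠ 0) (hx : 0 < x) :
    Gbound a x = exp (-x) * ⨍ u in 0..bCoef a, (x + u) ^ (a - 1) := by
  rw [intervalAverage_rpow_const_add (by simpa [sub_eq_iff_eq_add] using ha0) hx (bCoef_pos ha),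
    Gbound, sub_add_cancel]
  ring

theorem intervalAverage_bCoef_div_lt (ha : -2 < a) (ha0 : a ≠ 0) (ha1 : a < 1) (hx : 0 < x) :
    (⨍ u in 0..bCoef (a + 1), (x + u) ^ a) / a < exp x * incGamma (a + 1) x / a := by
  have huniform : (⨍ u in 0..bCoef (a + 1), (x + u) ^ a) / a =
      ⨍ u in 0..bCoef (a + 1), (x + u) ^ a / a := (integral_div _ _).symm
  have hexp : exp x * incGamma (a + 1) x / a = ∫ u in Ioi 0, exp (-u) * ((x + u) ^ a / a) := by
    simp only [← mul_div_assoc]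
    rw [integral_div, integral_exp_neg_mul_rpow_const_add]
  rw [huniform, hexp]
  have hb : 0 < bCoef (a + 1) := bCoef_pos (by linarith)
  rcases le_or_gt (bCoef (a + 1)) 1 with hb1 | hb1
  · exact intervalAverage_rpow_const_add_div_lt_of_le_one ha0 hx hb hb1
  · have ha_neg_one : -1 < a := by
      by_contra! h
      exact hb1.not_ge (bCoef_le_one (by linarith) (by linarith))
    refine intervalAverage_rpow_const_add_div_lt_of_one_lt ha_neg_one ha0 ha1 hx hb1 ?_
    have hbΓ := bCoef_rpow (a := a + 1) (by linarith) (by simpa using ha0)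
    rwa [add_sub_cancel_right, add_assoc, one_add_one_eq_two] at hbΓ

end Bound

theorem stmt14 (a : ℝ) (ha1 : -2 < a) (ha2 : a < 1) (ha0 : a ≠ 0) :
    ∀ x : ℝ, 0 < x →
      (1 / a) * ((if a = -1 then Real.exp (-x) * Real.log ((x + 1) / x)
          else Gbound (a + 1) x) - x ^ a * Real.exp (-x)) < incGamma a x := by
  intro x hx
  have hG : (if a = -1 then exp (-x) * log ((x + 1) / x) else Gbound (a + 1) x) =
      exp (-x) * ⨍ u in 0..bCoef (a + 1), (x + u) ^ a := by
    split_ifs with h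
    · simp only [h, neg_add_cancel, bCoef_zero, rpow_neg_one]
      rw [intervalAverage_inv_const_add hx one_pos, div_one]
    · rw [Gbound_eq_intervalAverage (by linarith) (by simpa [add_eq_zero_iff_eq_neg] using h) hx,
        add_sub_cancel_right]
  calc _ = exp (-x) * ((⨍ u in 0..bCoef (a + 1), (x + u) ^ a) / a) - x ^ a * exp (-x) / a := by
        rw [hG]; ring
    _ < exp (-x) * (exp x * incGamma (a + 1) x / a) - x ^ a * exp (-x) / a := by
        have hlt := intervalAverage_bCoef_div_lt ha1 ha0 ha2 hx
        exact sub_lt_sub_right (mul_lt_mul_of_pos_left hlt (exp_pos _)) _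
    _ = incGamma a x := by
        rw [incGamma_add_one a hx, exp_neg]; field_simp; ring
end

section
/- For every real x > 0, Γ(0,x) > e^(−x) · [ (1 + x/b_1) · ln(1 + b_1/x) − 1 ], where b_1 := e^(1−γ) and γ is the Euler–Mascheroni constant. -/
/-!
Substituting `t = x + s` gives `e^x Γ(0,x) = ∫_0^∞ e^(-s) / (x + s) ds`, while the bracket in the
bound is `∫_0^b (1 - s/b) / (x + s) ds` with `b = b_1`. So the claim is that
`∫_0^∞ φ(s) / (x + s) ds > 0` for `φ(s) = e^(-s) - max (1 - s/b) 0`.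

On `[0, b]` the function `φ` is convex with `φ(0) = 0`, and it is positive beyond `b`; hence it
changes sign at most once, at some `c`, from negative to positive. As `s / (x + s)` increases
with `s`, `∫ φ(s) / (x + s) ds = ∫ s / (x + s) * (φ(s) / s) ds > c / (x + c) * ∫ φ(s) / s ds`.
By the expansion `Γ(0,b) = ∫_0^b (1 - e^(-t)) / t dt - γ - log b`, the last integral is
`1 - γ - log b`, which is nonnegative exactly for `b ≤ e^(1-γ)`.
-/

open Real Filter Set

open MeasureTheory Topology

theorem exists_crossing_of_quasiconvexOn {β : Type*} [LinearOrder β] {f : ℝ → β} {r : β}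
    {a b : ℝ} (hab : a ≤ b) (hf : QuasiconvexOn ℝ (Icc a b) f) (ha : f a ≤ r) :
    ∃ c ∈ Icc a b, (∀ s ∈ Ico a c, f s ≤ r) ∧ ∀ s ∈ Ioc c b, r < f s := by
  set N := {s ∈ Icc a b | f s ≤ r}
  have haN : a ∈ N := ⟨left_mem_Icc.2 hab, ha⟩
  have hN : BddAbove N := ⟨b, fun s hs => hs.1.2⟩
  have hac : a ≤ sSup N := le_csSup hN haN
  refine ⟨sSup N, ⟨hac, csSup_le ⟨a, haN⟩ fun s hs => hs.1.2⟩, fun s hs => ?_, fun s hs => ?_⟩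
  · obtain ⟨t, ht, hst⟩ := exists_lt_of_lt_csSup ⟨a, haN⟩ hs.2
    exact ((hf r).ordConnected.out haN ht ⟨hs.1, hst.le⟩).2
  · by_contra! h
    exact hs.1.not_ge (le_csSup hN ⟨⟨hac.trans hs.1.le, hs.2⟩, h⟩)

theorem mul_setIntegral_lt_setIntegral_mul_of_sign_change {α : Type*} [LinearOrder α]
    [MeasurableSpace α] {μ : Measure α} {S : Set α} {f w : α → ℝ} {c : α}
    (hS : MeasurableSet S) (hw : StrictMonoOn w (insert c S))
    (hf : IntegrableOn f S μ) (hwf : IntegrableOn (fun s => w s * f s) S μ)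
    (hneg : ∀ s ∈ S, s < c → f s ≤ 0) (hpos : ∀ s ∈ S, c < s → 0 < f s)
    (hμ : 0 < μ (Ioi c ∩ S)) :
    w c * ∫ s in S, f s ∂μ < ∫ s in S, w s * f s ∂μ := by
  have hc : c ∈ insert c S := mem_insert c S
  have hright : ∀ s ∈ S, c < s → 0 < w s * f s - w c * f s := fun s hs hcs => by
    rw [← sub_mul]
    exact mul_pos (sub_pos.2 (hw hc (mem_insert_of_mem c hs) hcs)) (hpos s hs hcs)
  have hnonneg : ∀ s ∈ S, 0 ≤ w s * f s - w c * f s := fun s hs => by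
    rcases lt_trichotomy s c with hsc | rfl | hcs
    · rw [← sub_mul]
      exact mul_nonneg_of_nonpos_of_nonpos
        (sub_nonpos.2 (hw (mem_insert_of_mem c hs) hc hsc).le) (hneg s hs hsc)
    · rw [sub_self]
    · exact (hright s hs hcs).le
  have hint : IntegrableOn (fun s => w s * f s - w c * f s) S μ := hwf.sub (hf.const_mul (w c))
  have hdiff : 0 < ∫ s in S, (w s * f s - w c * f s) ∂μ := by
    rw [setIntegral_pos_iff_support_of_nonneg_ae (ae_restrict_of_forall_mem hS hnonneg) hint]
    exact hμ.trans_le <| measure_mono fun s hs => ⟨(hright s hs.2 hs.1).ne', hs.2⟩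
  rwa [integral_sub hwf (hf.const_mul (w c)), integral_const_mul, sub_pos] at hdiff

theorem integrableOn_exp_neg_div_add {a x : ℝ} (h : 0 < x + a) :
    IntegrableOn (fun s : ℝ => rexp (-s) / (x + s)) (Ioi a) := by
  refine Integrable.mono' ((integrableOn_exp_neg_Ioi a).div_const (x + a))
    (by fun_prop : Measurable fun s : ℝ => rexp (-s) / (x + s)).aestronglyMeasurable
    (ae_restrict_of_forall_mem measurableSet_Ioi fun s hs => ?_)
  have hs' : x + a ≤ x + s := by linarith [mem_Ioi.1 hs]
  rw [norm_of_nonneg (by positivity [h.trans_le hs'])]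
  gcongr

theorem integrableOn_exp_neg_div {a : ℝ} (ha : 0 < a) :
    IntegrableOn (fun s : ℝ => rexp (-s) / s) (Ioi a) := by
  simpa only [zero_add] using integrableOn_exp_neg_div_add (x := 0) (by rwa [zero_add])

theorem incGamma_eq_exp_neg_mul_integral (a x : ℝ) :
    incGamma a x = rexp (-x) * ∫ s in Ioi 0, (x + s) ^ (a - 1) * rexp (-s) := by
  have hshift := (measurePreserving_add_left volume x).setIntegral_preimage_emb
    (measurableEmbedding_addLeft x) (fun t : ℝ => t ^ (a - 1) * rexp (-t)) (Ioi x)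
  rw [preimage_const_add_Ioi, sub_self] at hshift
  rw [incGamma, ← hshift, ← integral_const_mul]
  congr 1 with s
  rw [neg_add, Real.exp_add]
  ring

theorem incGamma_zero_eq_exp_neg_mul_integral (x : ℝ) :
    incGamma 0 x = rexp (-x) * ∫ s in Ioi 0, rexp (-s) / (x + s) := by
  simp only [incGamma_eq_exp_neg_mul_integral, zero_sub, rpow_neg_one, inv_mul_eq_div]

theorem incGamma_zero_eq_integral_exp_neg_div (x : ℝ) :
    incGamma 0 x = ∫ t in Ioi x, rexp (-t) / t := by
  simp only [incGamma, zero_sub, rpow_neg_one, inv_mul_eq_div]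

theorem integral_log_mul_exp_neg :
    ∫ t in Ioi (0 : ℝ), Real.log t * rexp (-t) = -eulerMascheroniConstant := by
  have hGamma : HasDerivAt Complex.GammaIntegral (-(eulerMascheroniConstant : ℂ)) 1 := by
    refine Complex.hasDerivAt_Gamma_one.congr_of_eventuallyEq ?_
    filter_upwards [Complex.continuous_re.continuousAt.eventually_const_lt
      (show 0 < (1 : ℂ).re by simp)] with s hs using (Complex.Gamma_eq_integral hs).symm
  have hint := (Complex.hasDerivAt_GammaIntegral (s := 1) (by simp)).unique hGamma
  simp only [sub_self, Complex.cpow_zero, one_mul] at hint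
  rw [← Complex.ofReal_inj, ← integral_complex_ofReal]
  exact_mod_cast hint

theorem integrableOn_log_mul_exp_neg :
    IntegrableOn (fun t : ℝ => Real.log t * rexp (-t)) (Ioi 0) := by
  -- The integral is nonzero, hence not the junk value of a non-integrable function.
  refine not_imp_comm.1 integral_undef ?_
  rw [integral_log_mul_exp_neg]
  linarith [one_half_lt_eulerMascheroniConstant]

theorem tendsto_log_mul_exp_neg_atTop :
    Tendsto (fun t : ℝ => Real.log t * rexp (-t)) atTop (𝓝 0) := by
  refine isLittleO_log_id_atTop.isBigO.mul (Asymptotics.isBigO_refl _ _) |>.trans_tendsto ?_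
  simpa using tendsto_pow_mul_exp_neg_atTop_nhds_zero 1

theorem intervalIntegrable_one_sub_exp_neg_div {x : ℝ} (hx : 0 ≤ x) :
    IntervalIntegrable (fun t : ℝ => (1 - rexp (-t)) / t) volume 0 x := by
  refine (intervalIntegrable_const (c := (1 : ℝ))).mono_fun'
    (by fun_prop : Measurable fun t : ℝ => (1 - rexp (-t)) / t).aestronglyMeasurable ?_
  rw [uIoc_of_le hx]
  refine ae_restrict_of_forall_mem measurableSet_Ioc fun t ht => ?_
  have hnonneg : 0 ≤ 1 - rexp (-t) := by simpa using ht.1.le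
  have hle : 1 - rexp (-t) ≤ t := by linarith [one_sub_le_exp_neg t]
  simpa only [norm_of_nonneg (div_nonneg hnonneg ht.1.le)] using div_le_one_of_le₀ hle ht.1.le

theorem continuous_one_sub_exp_neg_mul_log :
    Continuous fun t : ℝ => (1 - rexp (-t)) * Real.log t := by
  refine continuous_iff_continuousAt.2 fun t => ?_
  rcases eq_or_ne t 0 with rfl | ht
  · have hexp : (fun t : ℝ => 1 - rexp (-t)) =O[𝓝 0] fun t => t := by
      simpa using ((hasDerivAt_neg (0 : ℝ)).exp.const_sub 1).isBigO_sub
    have hlim := (hexp.mul (Asymptotics.isBigO_refl Real.log _)).trans_tendsto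
      (continuous_mul_log.tendsto' 0 0 (by simp))
    simpa [ContinuousAt] using hlim
  · fun_prop (disch := exact ht)

theorem integral_log_mul_exp_neg_add_integral_one_sub_exp_neg_div {x : ℝ} (hx : 0 ≤ x) :
    (∫ t in 0..x, Real.log t * rexp (-t)) + ∫ t in 0..x, (1 - rexp (-t)) / t =
      (1 - rexp (-x)) * Real.log x := by
  have hlog : IntervalIntegrable (fun t : ℝ => Real.log t * rexp (-t)) volume 0 x :=
    intervalIntegral.intervalIntegrable_log'.mul_continuousOn (by fun_prop)
  have hEin := intervalIntegrable_one_sub_exp_neg_div hx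
  rw [← intervalIntegral.integral_add hlog hEin,
    intervalIntegral.integral_eq_sub_of_hasDerivAt_of_le hx
      continuous_one_sub_exp_neg_mul_log.continuousOn (fun t ht => ?_) (hlog.add hEin)]
  · simp
  · exact (((hasDerivAt_neg t).exp.const_sub 1).mul (hasDerivAt_log ht.1.ne')).congr_deriv
      (by ring)

theorem integral_Ioi_log_mul_exp_neg {x : ℝ} (hx : 0 < x) :
    ∫ t in Ioi x, Real.log t * rexp (-t) = Real.log x * rexp (-x) + incGamma 0 x := by
  have hlog := integrableOn_log_mul_exp_neg.mono_set (Ioi_subset_Ioi hx.le)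
  have hdiv := integrableOn_exp_neg_div hx
  have hparts := integral_Ioi_of_hasDerivAt_of_tendsto' (a := x)
    (fun t ht => ((hasDerivAt_log (hx.trans_le ht).ne').mul (hasDerivAt_neg t).exp).congr_deriv
      (show _ = rexp (-t) / t - Real.log t * rexp (-t) by ring))
    (hdiv.sub hlog) tendsto_log_mul_exp_neg_atTop
  rw [integral_sub hdiv hlog, ← incGamma_zero_eq_integral_exp_neg_div] at hparts
  simp only [Pi.mul_apply] at hparts
  linarith

theorem incGamma_zero_eq_integral_one_sub_exp_neg_div {x : ℝ} (hx : 0 < x) :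
    incGamma 0 x =
      (∫ t in 0..x, (1 - rexp (-t)) / t) - eulerMascheroniConstant - Real.log x := by
  have hsplit := intervalIntegral.integral_interval_add_Ioi integrableOn_log_mul_exp_neg
    (integrableOn_log_mul_exp_neg.mono_set (Ioi_subset_Ioi hx.le))
  rw [integral_log_mul_exp_neg, integral_Ioi_log_mul_exp_neg hx] at hsplit
  linarith [integral_log_mul_exp_neg_add_integral_one_sub_exp_neg_div hx.le]

/-- The ramp descending linearly from `1` at `s = 0` to `0` at `s = b` and vanishing beyond `b`
(intended for `0 < b` and `0 ≤ s`). It takes the place of `e^(-s)` in the lower bound for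
`∫_0^∞ e^(-s) / (x + s) ds`. -/
noncomputable def ramp (b s : ℝ) : ℝ := max (1 - s / b) 0

theorem ramp_of_le {b s : ℝ} (hb : 0 < b) (hs : s ≤ b) : ramp b s = 1 - s / b :=
  max_eq_left (sub_nonneg.2 ((div_le_one hb).2 hs))

theorem ramp_of_ge {b s : ℝ} (hb : 0 < b) (hs : b ≤ s) : ramp b s = 0 :=
  max_eq_right (sub_nonpos.2 ((one_le_div hb).2 hs))

theorem continuous_ramp (b : ℝ) : Continuous (ramp b) := by
  unfold ramp
  fun_prop

theorem convexOn_exp_neg_sub_ramp {b : ℝ} (hb : 0 < b) :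
    ConvexOn ℝ (Iic b) fun s => rexp (-s) - ramp b s := by
  have hexp : ConvexOn ℝ (Iic b) fun s : ℝ => rexp (-s) :=
    (convexOn_exp.comp_linearMap (-LinearMap.id)).subset (subset_univ _) (convex_Iic b)
  have hlin : ConcaveOn ℝ (Iic b) fun s : ℝ => 1 - s / b := by
    refine ⟨convex_Iic b, fun s _ t _ u v _ _ huv => le_of_eq ?_⟩
    simp only [smul_eq_mul]
    linear_combination huv
  exact (hexp.sub hlin).congr fun s hs => by simp only [Pi.sub_apply, ramp_of_le hb hs]

theorem exists_sign_change_exp_neg_sub_ramp {b : ℝ} (hb : 0 < b) :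
    ∃ c, 0 ≤ c ∧ (∀ s, 0 ≤ s → s < c → rexp (-s) - ramp b s ≤ 0) ∧
      ∀ s, c < s → 0 < rexp (-s) - ramp b s := by
  have hconv := (convexOn_exp_neg_sub_ramp hb).subset Icc_subset_Iic_self (convex_Icc 0 b)
  obtain ⟨c, hc, hneg, hpos⟩ := exists_crossing_of_quasiconvexOn (r := 0) hb.le
    hconv.quasiconvexOn (by simp [ramp_of_le hb hb.le])
  refine ⟨c, hc.1, fun s h0 hs => hneg s ⟨h0, hs⟩, fun s hs => ?_⟩
  rcases le_or_gt s b with hsb | hbs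
  · exact hpos s ⟨hs, hsb⟩
  · rw [ramp_of_ge hb hbs.le, sub_zero]
    exact exp_pos _

theorem integrableOn_ramp_div_add {b x : ℝ} (hb : 0 < b) (hx : 0 < x) :
    IntegrableOn (fun s => ramp b s / (x + s)) (Ioi 0) := by
  have hcont : ContinuousOn (fun s => ramp b s / (x + s)) (Icc 0 b) :=
    (continuous_ramp b).continuousOn.div (by fun_prop) fun s hs => by linarith [hs.1]
  refine (hcont.integrableOn_Icc.mono_set Ioc_subset_Icc_self).of_forall_sdiff_eq_zero
    measurableSet_Ioi fun s hs => ?_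
  have hbs : b < s := not_le.1 fun h => hs.2 ⟨hs.1, h⟩
  rw [ramp_of_ge hb hbs.le, zero_div]

theorem integral_ramp_div_add {b x : ℝ} (hb : 0 < b) (hx : 0 < x) :
    ∫ s in Ioi 0, ramp b s / (x + s) = (1 + x / b) * Real.log (1 + b / x) - 1 := by
  have hright : ∫ s in Ioi b, ramp b s / (x + s) = 0 :=
    setIntegral_eq_zero_of_forall_eq_zero fun s hs => by
      rw [ramp_of_ge hb (mem_Ioi.1 hs).le, zero_div]
  have hleft : ∫ s in 0..b, ramp b s / (x + s) = (1 + x / b) * Real.log (1 + b / x) - 1 := by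
    have hpos : ∀ s ∈ uIcc 0 b, 0 < x + s := fun s hs => by
      rw [uIcc_of_le hb.le] at hs
      linarith [hs.1]
    have hderiv : ∀ s ∈ uIcc 0 b, HasDerivAt
        (fun s => (1 + x / b) * Real.log (x + s) - s / b) (ramp b s / (x + s)) s := fun s hs => by
      refine ((((hasDerivAt_id s).const_add x).log (hpos s hs).ne').const_mul (1 + x / b)).sub
        ((hasDerivAt_id s).div_const b) |>.congr_deriv ?_
      rw [ramp_of_le hb (uIcc_of_le hb.le ▸ hs).2]
      have hxs : x + s ≠ 0 := (hpos s hs).ne'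
      simp only [id]
      field_simp
      ring
    rw [intervalIntegral.integral_eq_sub_of_hasDerivAt hderiv
      ((intervalIntegrable_iff_integrableOn_Ioc_of_le hb.le).2
        ((integrableOn_ramp_div_add hb hx).mono_set Ioc_subset_Ioi_self)),
      one_add_div hx.ne', Real.log_div (by positivity) hx.ne', div_self hb.ne', add_zero]
    ring
  have hint := integrableOn_ramp_div_add hb hx
  rw [← intervalIntegral.integral_interval_add_Ioi hint (hint.mono_set (Ioi_subset_Ioi hb.le)),
    hleft, hright, add_zero]

theorem eqOn_exp_neg_sub_ramp_div_Ioc {b : ℝ} (hb : 0 < b) :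
    EqOn (fun s => (rexp (-s) - ramp b s) / s) (fun s => 1 / b - (1 - rexp (-s)) / s)
      (Ioc 0 b) := fun s hs => by
  have hs0 : s ≠ 0 := hs.1.ne'
  simp only [ramp_of_le hb hs.2]
  field_simp
  ring

theorem eqOn_exp_neg_sub_ramp_div_Ioi {b : ℝ} (hb : 0 < b) :
    EqOn (fun s => (rexp (-s) - ramp b s) / s) (fun s => rexp (-s) / s) (Ioi b) := fun s hs => by
  simp only [ramp_of_ge hb (mem_Ioi.1 hs).le, sub_zero]

theorem integrableOn_exp_neg_sub_ramp_div {b : ℝ} (hb : 0 < b) :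
    IntegrableOn (fun s => (rexp (-s) - ramp b s) / s) (Ioi 0) := by
  rw [← Ioc_union_Ioi_eq_Ioi hb.le]
  refine IntegrableOn.union ?_ ?_
  · rw [integrableOn_congr_fun (eqOn_exp_neg_sub_ramp_div_Ioc hb) measurableSet_Ioc,
      ← intervalIntegrable_iff_integrableOn_Ioc_of_le hb.le]
    exact intervalIntegrable_const.sub (intervalIntegrable_one_sub_exp_neg_div hb.le)
  · rw [integrableOn_congr_fun (eqOn_exp_neg_sub_ramp_div_Ioi hb) measurableSet_Ioi]
    exact integrableOn_exp_neg_div hb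

theorem integral_exp_neg_sub_ramp_div {b : ℝ} (hb : 0 < b) :
    ∫ s in Ioi 0, (rexp (-s) - ramp b s) / s = 1 - eulerMascheroniConstant - Real.log b := by
  have hleft : ∫ s in 0..b, (rexp (-s) - ramp b s) / s =
      1 - ∫ s in 0..b, (1 - rexp (-s)) / s := by
    rw [intervalIntegral.integral_of_le hb.le,
      setIntegral_congr_fun measurableSet_Ioc (eqOn_exp_neg_sub_ramp_div_Ioc hb),
      ← intervalIntegral.integral_of_le hb.le,
      intervalIntegral.integral_sub intervalIntegrable_const
        (intervalIntegrable_one_sub_exp_neg_div hb.le),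
      intervalIntegral.integral_const, sub_zero, smul_eq_mul, mul_one_div_cancel hb.ne']
  have hright : ∫ s in Ioi b, (rexp (-s) - ramp b s) / s = incGamma 0 b := by
    rw [setIntegral_congr_fun measurableSet_Ioi (eqOn_exp_neg_sub_ramp_div_Ioi hb),
      incGamma_zero_eq_integral_exp_neg_div]
  have hint := integrableOn_exp_neg_sub_ramp_div hb
  rw [← intervalIntegral.integral_interval_add_Ioi hint (hint.mono_set (Ioi_subset_Ioi hb.le)),
    hleft, hright, incGamma_zero_eq_integral_one_sub_exp_neg_div hb]
  ring

theorem integrableOn_exp_neg_sub_ramp_div_add {b x : ℝ} (hb : 0 < b) (hx : 0 < x) :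
    IntegrableOn (fun s => (rexp (-s) - ramp b s) / (x + s)) (Ioi 0) := by
  simp only [sub_div]
  exact (integrableOn_exp_neg_div_add (by simpa)).sub (integrableOn_ramp_div_add hb hx)

theorem strictMonoOn_div_add {x : ℝ} (hx : 0 < x) :
    StrictMonoOn (fun s => s / (x + s)) (Ici 0) := fun s hs t ht hst => by
  have hs0 : 0 ≤ s := hs
  have ht0 : 0 ≤ t := ht
  beta_reduce
  rw [div_lt_div_iff₀ (by positivity) (by positivity)]
  linarith [mul_lt_mul_of_pos_left hst hx]

theorem integral_exp_neg_sub_ramp_div_add_pos {b x : ℝ} (hb : 0 < b)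
    (hbγ : b ≤ rexp (1 - eulerMascheroniConstant)) (hx : 0 < x) :
    0 < ∫ s in Ioi 0, (rexp (-s) - ramp b s) / (x + s) := by
  obtain ⟨c, hc, hneg, hpos⟩ := exists_sign_change_exp_neg_sub_ramp hb
  have hweight : EqOn (fun s => s / (x + s) * ((rexp (-s) - ramp b s) / s))
      (fun s => (rexp (-s) - ramp b s) / (x + s)) (Ioi 0) := fun s hs => by
    have hs0 : 0 < s := hs
    field_simp
  have hcompare := mul_setIntegral_lt_setIntegral_mul_of_sign_change (μ := volume)
    measurableSet_Ioi
    ((strictMonoOn_div_add hx).mono (insert_subset hc Ioi_subset_Ici_self))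
    (integrableOn_exp_neg_sub_ramp_div hb)
    ((integrableOn_congr_fun hweight measurableSet_Ioi).2
      (integrableOn_exp_neg_sub_ramp_div_add hb hx))
    (fun s (hs : 0 < s) hsc => div_nonpos_of_nonpos_of_nonneg (hneg s hs.le hsc) hs.le)
    (fun s hs hcs => div_pos (hpos s hcs) hs) (by simp [Ioi_inter_Ioi])
  rw [integral_exp_neg_sub_ramp_div hb, setIntegral_congr_fun measurableSet_Ioi hweight]
    at hcompare
  have hlog : Real.log b ≤ 1 - eulerMascheroniConstant := (log_le_iff_le_exp hb).2 hbγ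
  exact (mul_nonneg (by positivity) (by linarith)).trans_lt hcompare

theorem stmt15_general {b x : ℝ} (hb : 0 < b) (hbγ : b ≤ rexp (1 - eulerMascheroniConstant))
    (hx : 0 < x) : rexp (-x) * ((1 + x / b) * Real.log (1 + b / x) - 1) < incGamma 0 x := by
  rw [incGamma_zero_eq_exp_neg_mul_integral, ← integral_ramp_div_add hb hx]
  refine mul_lt_mul_of_pos_left (sub_pos.1 ?_) (exp_pos _)
  rw [← integral_sub (integrableOn_exp_neg_div_add (by simpa)) (integrableOn_ramp_div_add hb hx)]
  simpa only [sub_div] using integral_exp_neg_sub_ramp_div_add_pos hb hbγ hx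

theorem stmt15 : ∀ x : ℝ, 0 < x →
    Real.exp (-x) *
        ((1 + x / Real.exp (1 - Real.eulerMascheroniConstant)) *
            Real.log (1 + Real.exp (1 - Real.eulerMascheroniConstant) / x) - 1)
      < incGamma 0 x := fun _ hx =>
  stmt15_general (exp_pos _) le_rfl hx
end
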